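/- arXiv:2008.10828 — 5 statements merged into one kernel-verified Lean document; each statement's English description precedes it below -/
import Mathlib

section
/- Let V be a finite set with |V| = n ≥ 2 and symmetric weights C : V × V → [0,1] with C_ii = 0, and let 0 < Δ_min ≤ Δ_max. Let T be a binary hierarchical clustering tree on V such that: (i) for every internal node t of T with leaf set V_t, every i ∈ V_t has Δ_min ≤ Σ_{j ∈ V_t} C_ij ≤ Δ_max; and (ii) at every internal node t, the split of V_t into the leaf sets (A_t, B_t) of its two children satisfies φ_{V_t}(A_t) ≤ (Δ_max/√Δ_min)·√(min_{∅ ≠ S ⊊ V_t} φ_{V_t}(S)) (the quality guarantee that Cheeger's inequality gives for spectral sweep cuts). Then cost_V(T) ≤ Δ_max·√(27/Δ_min)·n·log₂(n)·√(cost_V(T*)), where T* is a tree minimizing cost_V. -/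
open Finset

/-- A rooted binary hierarchical clustering tree with leaves labelled by `α`. -/
inductive HTree (α : Type*) where
  | leaf : α → HTree α
  | node : HTree α → HTree α → HTree α

namespace HTree

variable {α : Type*} [DecidableEq α]

/-- The set of leaf labels of a tree. -/
def leaves : HTree α → Finset α
  | .leaf a => {a}
  | .node l r => leaves l ∪ leaves r

/-- All leaf labels of the tree are pairwise distinct, i.e. the leaves of the two
subtrees of every internal node are disjoint. -/
def distinctLeaves : HTree α → Prop
  | .leaf _ => True
  | .node l r => distinctLeaves l ∧ distinctLeaves r ∧ Disjoint (leaves l) (leaves r)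

/-- `T` is a hierarchical clustering tree on the whole vertex set `V` (= all of `α`):
its leaves are pairwise distinct and are exactly the elements of `V`. -/
def IsTreeOn [Fintype α] (T : HTree α) : Prop :=
  distinctLeaves T ∧ leaves T = Finset.univ

/-- Dasgupta's hierarchical clustering cost
`cost_V(T) = Σ_{unordered pairs {i,j}, i ≠ j} C_ij·|leaves(T[i ∨ j])|`,
written equivalently in recursive form: each internal node `t` splitting into children
with leaf sets `A`, `B` contributes `|leaves(t)| · Σ_{i ∈ A, j ∈ B} C_ij`
(each unordered cross pair `{i,j}` has `t` as its lowest common ancestor and is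
counted exactly once since `A` and `B` are disjoint). -/
noncomputable def cost (C : α → α → ℝ) : HTree α → ℝ
  | .leaf _ => 0
  | .node l r =>
      ((leaves l ∪ leaves r).card : ℝ) * (∑ i ∈ leaves l, ∑ j ∈ leaves r, C i j)
        + cost C l + cost C r

end HTree

/-- The expansion within `W` of a nonempty proper subset `S ⊊ W`:
`φ_W(S) = (Σ_{i ∈ S, j ∈ W∖S} C_ij) / min(|S|, |W∖S|)`. -/
noncomputable def expansionIn {α : Type*} [DecidableEq α]
    (C : α → α → ℝ) (W S : Finset α) : ℝ :=
  (∑ i ∈ S, ∑ j ∈ W \ S, C i j) / min (S.card : ℝ) (((W \ S).card : ℝ))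

/-- The two conditions, at every internal node `t` of the tree with leaf set `V_t`:
(i) every `i ∈ V_t` has degree (within `V_t`) in `[Δ_min, Δ_max]`; and
(ii) the split `(A_t, B_t)` of `V_t` into the leaf sets of the two children satisfies the
spectral sweep-cut guarantee
`φ_{V_t}(A_t) ≤ (Δ_max/√Δ_min)·√(min_{∅ ≠ S ⊊ V_t} φ_{V_t}(S))`,
expressed equivalently as `φ_{V_t}(A_t) ≤ (Δ_max/√Δ_min)·√(φ_{V_t}(S))` for every
nonempty proper `S ⊊ V_t`. -/
def CheegerSplits {α : Type*} [DecidableEq α]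
    (C : α → α → ℝ) (Δmin Δmax : ℝ) : HTree α → Prop
  | .leaf _ => True
  | .node l r =>
      (∀ i ∈ l.leaves ∪ r.leaves,
          Δmin ≤ (∑ j ∈ l.leaves ∪ r.leaves, C i j) ∧
            (∑ j ∈ l.leaves ∪ r.leaves, C i j) ≤ Δmax) ∧
      (∀ S ⊆ l.leaves ∪ r.leaves, S.Nonempty → S ≠ l.leaves ∪ r.leaves →
          expansionIn C (l.leaves ∪ r.leaves) l.leaves
            ≤ (Δmax / Real.sqrt Δmin) * Real.sqrt (expansionIn C (l.leaves ∪ r.leaves) S)) ∧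
      CheegerSplits C Δmin Δmax l ∧ CheegerSplits C Δmin Δmax r


lemma HTree.leaves_nonempty' {α : Type*} [DecidableEq α] (T : HTree α) : T.leaves.Nonempty := by
  induction T with
  | leaf a => exact ⟨a, by simp [HTree.leaves]⟩
  | node l r ihl ihr =>
    obtain ⟨x, hx⟩ := ihl
    exact ⟨x, by simp [HTree.leaves, hx]⟩

lemma cut_nonneg' {α : Type*} (C : α → α → ℝ) (h0 : ∀ i j, 0 ≤ C i j) (A B : Finset α) :
    0 ≤ ∑ i ∈ A, ∑ j ∈ B, C i j :=
  Finset.sum_nonneg fun i _ => Finset.sum_nonneg fun j _ => h0 i j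

lemma cut_mono' {α : Type*} (C : α → α → ℝ) (h0 : ∀ i j, 0 ≤ C i j) {A B A' B' : Finset α}
    (hA : A ⊆ A') (hB : B ⊆ B') :
    ∑ i ∈ A, ∑ j ∈ B, C i j ≤ ∑ i ∈ A', ∑ j ∈ B', C i j := by
  refine (Finset.sum_le_sum fun i _ =>
    Finset.sum_le_sum_of_subset_of_nonneg hB fun j _ _ => h0 i j).trans ?_
  exact Finset.sum_le_sum_of_subset_of_nonneg hA
    fun i _ _ => Finset.sum_nonneg fun j _ => h0 i j

lemma cut_union_le' {α : Type*} [DecidableEq α] (C : α → α → ℝ) (h0 : ∀ i j, 0 ≤ C i j)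
    (A B D : Finset α) :
    ∑ i ∈ A, ∑ j ∈ B ∪ D, C i j ≤ ∑ i ∈ A, ∑ j ∈ B, C i j + ∑ i ∈ A, ∑ j ∈ D, C i j := by
  rw [← Finset.sum_add_distrib]
  refine Finset.sum_le_sum fun i _ => ?_
  rw [← Finset.sum_union_inter]
  have : 0 ≤ ∑ j ∈ B ∩ D, C i j := Finset.sum_nonneg fun j _ => h0 i j
  linarith

lemma cost_nonneg' {α : Type*} [DecidableEq α] (C : α → α → ℝ) (h0 : ∀ i j, 0 ≤ C i j)
    (T : HTree α) : 0 ≤ HTree.cost C T := by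
  induction T with
  | leaf a => simp [HTree.cost]
  | node l r ihl ihr =>
    have := cut_nonneg' C h0 l.leaves r.leaves
    simp only [HTree.cost]
    positivity

lemma balanced_cut' {α : Type*} [DecidableEq α] (C : α → α → ℝ)
    (hsymm : ∀ i j, C i j = C j i) (h0 : ∀ i j, 0 ≤ C i j) (W : Finset α) (hW : 2 ≤ W.card)
    (T : HTree α) (hbig : 2 * W.card < 3 * (W ∩ T.leaves).card) :
    ∃ S ⊆ W ∩ T.leaves, W.card ≤ 3 * S.card ∧ 3 * S.card ≤ 2 * W.card ∧
      (∑ i ∈ S, ∑ j ∈ (W ∩ T.leaves) \ S, C i j) * (2 * (W.card : ℝ)) ≤ 3 * HTree.cost C T := by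
  induction T with
  | leaf a =>
    exfalso
    have : (W ∩ (HTree.leaf a).leaves).card ≤ 1 :=
      (Finset.card_le_card Finset.inter_subset_right).trans (by simp [HTree.leaves])
    omega
  | node l r ihl ihr =>
    have key : ∀ A B : Finset α, (∑ i ∈ A, ∑ j ∈ B, C i j) = ∑ i ∈ B, ∑ j ∈ A, C i j := by
      intro A B
      rw [Finset.sum_comm]
      exact Finset.sum_congr rfl fun i _ => Finset.sum_congr rfl fun j _ => hsymm _ _
    have hU : 2 * (W.card : ℝ) ≤ 3 * ((l.leaves ∪ r.leaves).card : ℝ) := by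
      have := Finset.card_le_card (Finset.inter_subset_right : W ∩ (HTree.node l r).leaves ⊆ _)
      simp only [HTree.leaves] at this hbig
      have h2 : 2 * W.card ≤ 3 * (l.leaves ∪ r.leaves).card := by omega
      exact_mod_cast h2
    have hw := cut_nonneg' C h0 l.leaves r.leaves
    have hcl := cost_nonneg' C h0 l
    have hcr := cost_nonneg' C h0 r
    have hW0 : (0 : ℝ) ≤ 2 * W.card := by positivity
    have hUw : (∑ i ∈ l.leaves, ∑ j ∈ r.leaves, C i j) * (2 * (W.card : ℝ)) ≤
        3 * (((l.leaves ∪ r.leaves).card : ℝ) * (∑ i ∈ l.leaves, ∑ j ∈ r.leaves, C i j)) := by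
      nlinarith
    simp only [HTree.leaves, HTree.cost] at *
    rw [Finset.inter_union_distrib_left] at *
    by_cases hl : 2 * W.card < 3 * (W ∩ l.leaves).card
    · obtain ⟨S, hS, h1, h2, h3⟩ := ihl hl
      refine ⟨S, hS.trans Finset.subset_union_left, h1, h2, ?_⟩
      have : ∑ i ∈ S, ∑ j ∈ (W ∩ l.leaves ∪ W ∩ r.leaves) \ S, C i j ≤
          ∑ i ∈ S, ∑ j ∈ (W ∩ l.leaves) \ S, C i j + ∑ i ∈ l.leaves, ∑ j ∈ r.leaves, C i j := by
        refine (cut_mono' C h0 (Finset.Subset.refl S) (?_ : _ ⊆ (W ∩ l.leaves) \ S ∪ r.leaves)).trans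
          ((cut_union_le' C h0 _ _ _).trans ?_)
        · intro x; simp; tauto
        · refine add_le_add le_rfl ?_
          exact cut_mono' C h0 (hS.trans Finset.inter_subset_right) (Finset.Subset.refl _)
      have := mul_le_mul_of_nonneg_right this hW0
      linarith
    by_cases hr : 2 * W.card < 3 * (W ∩ r.leaves).card
    · obtain ⟨S, hS, h1, h2, h3⟩ := ihr hr
      refine ⟨S, hS.trans Finset.subset_union_right, h1, h2, ?_⟩
      have : ∑ i ∈ S, ∑ j ∈ (W ∩ l.leaves ∪ W ∩ r.leaves) \ S, C i j ≤
          ∑ i ∈ S, ∑ j ∈ (W ∩ r.leaves) \ S, C i j + ∑ i ∈ l.leaves, ∑ j ∈ r.leaves, C i j := by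
        refine (cut_mono' C h0 (Finset.Subset.refl S) (?_ : _ ⊆ (W ∩ r.leaves) \ S ∪ l.leaves)).trans
          ((cut_union_le' C h0 _ _ _).trans ?_)
        · intro x; simp; tauto
        · rw [key l.leaves]
          refine add_le_add le_rfl ?_
          exact cut_mono' C h0 (hS.trans Finset.inter_subset_right) (Finset.Subset.refl _)
      have := mul_le_mul_of_nonneg_right this hW0
      linarith
    have hcu := Finset.card_union_le (W ∩ l.leaves) (W ∩ r.leaves)
    by_cases hlr : (W ∩ r.leaves).card ≤ (W ∩ l.leaves).card
    · refine ⟨W ∩ l.leaves, Finset.subset_union_left, by omega, by omega, ?_⟩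
      have : ∑ i ∈ W ∩ l.leaves, ∑ j ∈ (W ∩ l.leaves ∪ W ∩ r.leaves) \ (W ∩ l.leaves), C i j ≤
          ∑ i ∈ l.leaves, ∑ j ∈ r.leaves, C i j := by
        refine cut_mono' C h0 Finset.inter_subset_right ?_
        intro x; simp; tauto
      have := mul_le_mul_of_nonneg_right this hW0
      linarith
    · refine ⟨W ∩ r.leaves, Finset.subset_union_right, by omega, by omega, ?_⟩
      have : ∑ i ∈ W ∩ r.leaves, ∑ j ∈ (W ∩ l.leaves ∪ W ∩ r.leaves) \ (W ∩ r.leaves), C i j ≤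
          ∑ i ∈ l.leaves, ∑ j ∈ r.leaves, C i j := by
        rw [key l.leaves]
        refine cut_mono' C h0 Finset.inter_subset_right ?_
        intro x; simp; tauto
      have := mul_le_mul_of_nonneg_right this hW0
      linarith

lemma expansion_bound' {α : Type*} [Fintype α] [DecidableEq α] (C : α → α → ℝ)
    (hsymm : ∀ i j, C i j = C j i) (h0 : ∀ i j, 0 ≤ C i j) (W : Finset α) (hW : 2 ≤ W.card)
    (T : HTree α) (hT : T.IsTreeOn) :
    ∃ S ⊆ W, S.Nonempty ∧ S ≠ W ∧
      expansionIn C W S ≤ 27 * HTree.cost C T / (W.card : ℝ) ^ 2 := by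
  have hWi : W ∩ T.leaves = W := by rw [hT.2, Finset.inter_univ]
  obtain ⟨S, hS, h1, h2, h3⟩ := balanced_cut' C hsymm h0 W hW T (by rw [hWi]; omega)
  rw [hWi] at hS h3
  have hsd := Finset.card_sdiff_add_card_eq_card hS
  refine ⟨S, hS, Finset.card_pos.mp (by omega), fun h => by subst h; omega, ?_⟩
  have hm : (W.card : ℝ) / 3 ≤ min (S.card : ℝ) ((W \ S).card : ℝ) := by
    have e1 : (W.card : ℝ) ≤ 3 * S.card := by exact_mod_cast h1
    have e2 : (W.card : ℝ) ≤ 3 * (W \ S).card := by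
      have : W.card ≤ 3 * (W \ S).card := by omega
      exact_mod_cast this
    apply le_min <;> linarith
  have hWpos : (0 : ℝ) < W.card := by
    have : 0 < W.card := by omega
    exact_mod_cast this
  have hc := cut_nonneg' C h0 S (W \ S)
  have hcT := cost_nonneg' C h0 T
  unfold expansionIn
  calc _ ≤ (∑ i ∈ S, ∑ j ∈ W \ S, C i j) / ((W.card : ℝ) / 3) := by gcongr
    _ ≤ _ := by
      rw [div_le_div_iff₀ (by positivity) (by positivity)]
      nlinarith

lemma log_step_aux' (a b : ℝ) (ha : 0 < a) (hab : a ≤ b) :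
    a * Real.logb 2 a + b * Real.logb 2 b + a ≤ (a + b) * Real.logb 2 (a + b) := by
  have h1 : Real.logb 2 a + 1 ≤ Real.logb 2 (a + b) := by
    have : Real.logb 2 (2 * a) = 1 + Real.logb 2 a := by
      rw [Real.logb_mul (by norm_num) ha.ne', Real.logb_self_eq_one (by norm_num)]
    rw [add_comm, ← this]
    exact Real.logb_le_logb_of_le (by norm_num) (by positivity) (by linarith)
  have h2 : Real.logb 2 b ≤ Real.logb 2 (a + b) :=
    Real.logb_le_logb_of_le (by norm_num) (by linarith) (by linarith)
  nlinarith [mul_le_mul_of_nonneg_left h1 ha.le,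
    mul_le_mul_of_nonneg_left h2 (ha.le.trans hab)]

lemma log_step' (a b : ℝ) (ha : 0 < a) (hb : 0 < b) :
    a * Real.logb 2 a + b * Real.logb 2 b + min a b ≤ (a + b) * Real.logb 2 (a + b) := by
  rcases le_total a b with h | h
  · rw [min_eq_left h]; exact log_step_aux' a b ha h
  · rw [min_eq_right h, add_comm a b]
    linarith [log_step_aux' b a hb h]

lemma main_induct' {α : Type*} [Fintype α] [DecidableEq α]
    (C : α → α → ℝ)
    (hsymm : ∀ i j, C i j = C j i)
    (h0 : ∀ i j, 0 ≤ C i j)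
    (Δmin Δmax : ℝ) (hΔmin : 0 < Δmin) (hΔ : Δmin ≤ Δmax)
    (Tstar : HTree α) (hTstar : Tstar.IsTreeOn)
    (T : HTree α) (hT : T.distinctLeaves) (hsplits : CheegerSplits C Δmin Δmax T) :
    HTree.cost C T ≤ (Δmax / Real.sqrt Δmin * Real.sqrt (27 * HTree.cost C Tstar)) *
      ((T.leaves.card : ℝ) * Real.logb 2 (T.leaves.card : ℝ)) := by
  have hK : 0 ≤ Δmax / Real.sqrt Δmin := div_nonneg (by linarith) (Real.sqrt_nonneg _)
  induction T with
  | leaf a => simp [HTree.cost, HTree.leaves]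
  | node l r ihl ihr =>
    obtain ⟨dl, dr, hd⟩ := hT
    obtain ⟨-, hφ, sl, sr⟩ := hsplits
    have il := ihl dl sl
    have ir := ihr dr sr
    have hlc := Finset.card_pos.mpr l.leaves_nonempty'
    have hrc := Finset.card_pos.mpr r.leaves_nonempty'
    have hcu := Finset.card_union_of_disjoint hd
    obtain ⟨S, hS, hSn, hSne, hSφ⟩ := expansion_bound' C hsymm h0 (l.leaves ∪ r.leaves)
      (by omega) Tstar hTstar
    have h := hφ S hS hSn hSne
    have hsd : (l.leaves ∪ r.leaves) \ l.leaves = r.leaves := Finset.union_sdiff_cancel_left hd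
    have hlc' : (0 : ℝ) < l.leaves.card := by exact_mod_cast hlc
    have hrc' : (0 : ℝ) < r.leaves.card := by exact_mod_cast hrc
    have hlog := log_step' _ _ hlc' hrc'
    have hmpos : (0 : ℝ) < (l.leaves ∪ r.leaves).card := by rw [hcu]; push_cast; positivity
    have hs : Real.sqrt (expansionIn C (l.leaves ∪ r.leaves) S) ≤
        Real.sqrt (27 * HTree.cost C Tstar) / ((l.leaves ∪ r.leaves).card : ℝ) := by
      refine (Real.sqrt_le_sqrt hSφ).trans ?_
      rw [Real.sqrt_div' _ (by positivity), Real.sqrt_sq hmpos.le]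
    have h' := h.trans (mul_le_mul_of_nonneg_left hs hK)
    unfold expansionIn at h'
    rw [hsd] at h'
    have hmin : 0 < min (l.leaves.card : ℝ) (r.leaves.card : ℝ) := lt_min hlc' hrc'
    rw [div_le_iff₀ hmin] at h'
    have h2 := mul_le_mul_of_nonneg_left h' hmpos.le
    set Q := Real.sqrt (27 * HTree.cost C Tstar) with hQ
    have hQ0 : 0 ≤ Q := Real.sqrt_nonneg _
    have e : ((l.leaves ∪ r.leaves).card : ℝ) * (Δmax / Real.sqrt Δmin *
        (Q / ((l.leaves ∪ r.leaves).card : ℝ)) * min (l.leaves.card : ℝ) (r.leaves.card : ℝ)) =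
        (Δmax / Real.sqrt Δmin * Q) * min (l.leaves.card : ℝ) (r.leaves.card : ℝ) := by
      field_simp
    rw [e] at h2
    have h3 := mul_le_mul_of_nonneg_left hlog (mul_nonneg hK hQ0)
    have e2 : ((l.leaves ∪ r.leaves).card : ℝ) = l.leaves.card + r.leaves.card := by
      rw [hcu]; push_cast; rfl
    simp only [HTree.cost, HTree.leaves]
    rw [e2] at h2 ⊢
    linarith

/-- if `T` is a binary hierarchical clustering tree on `V` (`|V| = n ≥ 2`)
whose every internal node has degrees within `[Δ_min, Δ_max]` and whose every split meets
the Cheeger sweep-cut quality guarantee, then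
`cost_V(T) ≤ Δ_max·√(27/Δ_min)·n·log₂(n)·√(cost_V(T*))`
where `T*` minimizes `cost_V`. -/
theorem cost_spectral_split_bound {α : Type*} [Fintype α] [DecidableEq α]
    (n : ℕ) (hn : 2 ≤ n) (hcard : Fintype.card α = n)
    (C : α → α → ℝ)
    (hsymm : ∀ i j, C i j = C j i)
    (h0 : ∀ i j, 0 ≤ C i j) (h1 : ∀ i j, C i j ≤ 1)
    (hdiag : ∀ i, C i i = 0)
    (Δmin Δmax : ℝ) (hΔmin : 0 < Δmin) (hΔ : Δmin ≤ Δmax)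
    (T : HTree α) (hT : T.IsTreeOn) (hsplits : CheegerSplits C Δmin Δmax T)
    (Tstar : HTree α) (hTstar : Tstar.IsTreeOn)
    (hmin : ∀ T' : HTree α, T'.IsTreeOn → HTree.cost C Tstar ≤ HTree.cost C T') :
    HTree.cost C T
      ≤ Δmax * Real.sqrt (27 / Δmin) * (n : ℝ) * Real.logb 2 (n : ℝ)
          * Real.sqrt (HTree.cost C Tstar) := by
  have h := main_induct' C hsymm h0 Δmin Δmax hΔmin hΔ Tstar hTstar T hT.1 hsplits
  rw [hT.2, Finset.card_univ, hcard] at h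
  refine h.trans_eq ?_
  rw [Real.sqrt_mul (by norm_num), Real.sqrt_div (by norm_num)]
  ring
end

section
/- Every binary hierarchical clustering tree T on a set V of n ≥ 1 elements with unit weights (C_ij = 1 for all i ≠ j, C_ii = 0) has cost_V(T) = (n³ − n)/3; in particular all binary trees on the unit-weight n-clique have the same cost. -/
open Finset

theorem HTree.cost_unit_aux {α : Type*} [DecidableEq α]
    (C : α → α → ℝ) (hC : ∀ i j, C i j = if i = j then 0 else 1)
    (T : HTree α) (hT : T.distinctLeaves) :
    HTree.cost C T = ((T.leaves.card : ℝ)^3 - T.leaves.card) / 3 := by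
  induction T with
  | leaf a => simp [HTree.cost, HTree.leaves]
  | node l r ihl ihr =>
    obtain ⟨hl, hr, hd⟩ := hT
    have hs : ∑ i ∈ l.leaves, ∑ j ∈ r.leaves, C i j
        = (l.leaves.card : ℝ) * r.leaves.card := by
      have h1 : ∀ i ∈ l.leaves, ∑ j ∈ r.leaves, C i j = (r.leaves.card : ℝ) := by
        intro i hi
        have h2 : ∀ j ∈ r.leaves, C i j = 1 := by
          intro j hj
          rw [hC, if_neg]
          rintro rfl
          exact Finset.disjoint_left.mp hd hi hj
        rw [Finset.sum_congr rfl h2]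
        simp
      rw [Finset.sum_congr rfl h1]
      simp
    simp only [HTree.cost, HTree.leaves]
    rw [hs, ihl hl, ihr hr, Finset.card_union_of_disjoint hd]
    push_cast
    ring

/-- every binary hierarchical clustering tree on a unit-weight `n`-clique
(`n ≥ 1`) has cost `(n³ − n)/3`; in particular all binary trees on the unit-weight
`n`-clique have the same cost. -/
theorem cost_unit_clique {α : Type*} [Fintype α] [DecidableEq α]
    (n : ℕ) (hn : 1 ≤ n) (hcard : Fintype.card α = n)
    (C : α → α → ℝ) (hC : ∀ i j, C i j = if i = j then 0 else 1)
    (T : HTree α) (hT : T.IsTreeOn) :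
    HTree.cost C T = ((n : ℝ)^3 - n) / 3 ∧
      ∀ T' : HTree α, T'.IsTreeOn → HTree.cost C T' = HTree.cost C T := by
  have key : ∀ S : HTree α, S.IsTreeOn → HTree.cost C S = ((n : ℝ)^3 - n) / 3 := by
    intro S hS
    rw [HTree.cost_unit_aux C hC S hS.1, hS.2, Finset.card_univ, hcard]
  exact ⟨key T hT, fun S hS => (key S hS).trans (key T hT).symm⟩
end

section
/- Let n ≥ 2 be even, let V be a set of n elements partitioned into P₁ and P₂ with |P₁| = |P₂| = n/2, let p, q ≥ 0, and define weights C_ij = p if i ≠ j lie in the same part, C_ij = q if they lie in different parts, and C_ii = 0. Then every binary hierarchical clustering tree T₀ on V whose root split is exactly (P₁, P₂) satisfies cost_V(T₀) = q·n³/4 + (2p/3)·(n³/8 − n/2). -/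
open Finset

theorem HTree.cost_clique {α : Type*} [DecidableEq α] (C : α → α → ℝ) (p : ℝ) (T : HTree α)
    (hd : T.distinctLeaves)
    (h : ∀ i ∈ T.leaves, ∀ j ∈ T.leaves, i ≠ j → C i j = p) :
    HTree.cost C T = p / 3 * ((T.leaves.card : ℝ)^3 - T.leaves.card) := by
  induction T with
  | leaf a => simp [HTree.cost, HTree.leaves]
  | node l r ihl ihr =>
    obtain ⟨h1, h2, h3⟩ := hd
    simp only [HTree.leaves, Finset.mem_union] at h
    have e : ∑ i ∈ l.leaves, ∑ j ∈ r.leaves, C i j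
        = ∑ i ∈ l.leaves, ∑ j ∈ r.leaves, p :=
      Finset.sum_congr rfl fun i hi => Finset.sum_congr rfl fun j hj =>
        h i (Or.inl hi) j (Or.inr hj) (fun hij => Finset.disjoint_left.mp h3 hi (hij ▸ hj))
    simp only [HTree.cost, HTree.leaves]
    rw [e, ihl h1 (fun i hi j hj => h i (Or.inl hi) j (Or.inl hj)),
      ihr h2 (fun i hi j hj => h i (Or.inr hi) j (Or.inr hj)), Finset.card_union_of_disjoint h3]
    simp only [Finset.sum_const, nsmul_eq_mul]
    push_cast
    ring

/-- for the `(n,p,q)`-planted partition weights on `V` with parts `P₁`, `P₂ = P₁ᶜ`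
of size `n/2` each, every binary hierarchical clustering tree whose root split is exactly
`(P₁, P₂)` has cost `q·n³/4 + (2p/3)·(n³/8 − n/2)`. -/
theorem cost_planted_partition_root_split {α : Type*} [Fintype α] [DecidableEq α]
    (n : ℕ) (hn : 2 ≤ n) (hcard : Fintype.card α = n)
    (P₁ : Finset α) (hP₁ : 2 * P₁.card = n)
    (p q : ℝ) (hp : 0 ≤ p) (hq : 0 ≤ q)
    (C : α → α → ℝ)
    (hC : ∀ i j, C i j = if i = j then 0 else if (i ∈ P₁ ↔ j ∈ P₁) then p else q)
    (L R : HTree α) (hTree : (HTree.node L R).IsTreeOn)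
    (hL : L.leaves = P₁) (hR : R.leaves = P₁ᶜ) :
    HTree.cost C (HTree.node L R)
      = q * (n : ℝ)^3 / 4 + (2 * p / 3) * ((n : ℝ)^3 / 8 - (n : ℝ) / 2) := by
  obtain ⟨⟨h1, h2, h3⟩, -⟩ := hTree
  have hc : P₁ᶜ.card = P₁.card := by
    rw [Finset.card_compl]; omega
  have e : ∑ i ∈ P₁, ∑ j ∈ P₁ᶜ, C i j = ∑ i ∈ P₁, ∑ j ∈ P₁ᶜ, q := by
    refine Finset.sum_congr rfl fun i hi => Finset.sum_congr rfl fun j hj => ?_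
    rw [Finset.mem_compl] at hj
    have hij : i ≠ j := fun hij => hj (hij ▸ hi)
    rw [hC]
    simp [hij, hi, hj]
  have eL := HTree.cost_clique C p L h1 (by
    intro i hi j hj hij
    rw [hL] at hi hj
    rw [hC]
    simp [hij, hi, hj])
  have eR := HTree.cost_clique C p R h2 (by
    intro i hi j hj hij
    rw [hR, Finset.mem_compl] at hi hj
    rw [hC]
    simp [hij, hi, hj])
  simp only [HTree.cost]
  rw [eL, eR, Finset.card_union_of_disjoint h3, hL, hR, hc, e, ← hP₁]
  simp only [Finset.sum_const, nsmul_eq_mul, hc]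
  push_cast
  ring
end

section
/- Let n ≥ 4 be even, let 0 < q < p ≤ 1, let V be a set of n elements partitioned into P₁ and P₂ with |P₁| = |P₂| = n/2, and define weights C_ij = p if i ≠ j lie in the same part, C_ij = q otherwise (C_ii = 0). Set k = 36p/(p − q)². Let T be any binary hierarchical clustering tree on V whose root split (A, B) satisfies |A| = |B| = n/2 and |A ∖ P₁| ≤ k (at most k misclassified vertices per side), with arbitrary binary subtrees on A and B. Then cost_V(T) ≤ c₁·cost_V(T₀), where T₀ is any binary hierarchical clustering tree whose root split is exactly (P₁, P₂) and c₁ = 1 + 144p/(q·n·(p − q)). -/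
open Finset

theorem HTree.cost_le_aux {α : Type*} [DecidableEq α] (C : α → α → ℝ) (p : ℝ)
    (hC : ∀ i j, i ≠ j → C i j ≤ p) (T : HTree α) (hT : T.distinctLeaves) :
    HTree.cost C T ≤ p * (((T.leaves.card : ℝ))^3 - T.leaves.card) / 3 := by
  induction T with
  | leaf a => simp [HTree.cost, HTree.leaves]
  | node l r ihl ihr =>
    obtain ⟨hl, hr, hd⟩ := hT
    have h1 := ihl hl
    have h2 := ihr hr
    have h3 : (∑ i ∈ l.leaves, ∑ j ∈ r.leaves, C i j) ≤ ∑ i ∈ l.leaves, ∑ j ∈ r.leaves, p := by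
      refine Finset.sum_le_sum fun i hi => Finset.sum_le_sum fun j hj => hC i j ?_
      exact fun h => Finset.disjoint_left.mp hd hi (h ▸ hj)
    simp only [Finset.sum_const, nsmul_eq_mul] at h3
    simp only [HTree.cost, HTree.leaves, Finset.card_union_of_disjoint hd, Nat.cast_add]
    have h4 := mul_le_mul_of_nonneg_left h3
      (show (0:ℝ) ≤ (l.leaves.card : ℝ) + r.leaves.card by positivity)
    nlinarith

theorem HTree.cost_eq_aux {α : Type*} [DecidableEq α] (C : α → α → ℝ) (p : ℝ)
    (T : HTree α) (hC : ∀ i ∈ T.leaves, ∀ j ∈ T.leaves, i ≠ j → C i j = p)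
    (hT : T.distinctLeaves) :
    HTree.cost C T = p * (((T.leaves.card : ℝ))^3 - T.leaves.card) / 3 := by
  induction T with
  | leaf a => simp [HTree.cost, HTree.leaves]
  | node l r ihl ihr =>
    obtain ⟨hl, hr, hd⟩ := hT
    simp only [HTree.leaves, Finset.mem_union] at hC
    have h1 := ihl (fun i hi j hj => hC i (Or.inl hi) j (Or.inl hj)) hl
    have h2 := ihr (fun i hi j hj => hC i (Or.inr hi) j (Or.inr hj)) hr
    have h3 : (∑ i ∈ l.leaves, ∑ j ∈ r.leaves, C i j) = ∑ i ∈ l.leaves, ∑ j ∈ r.leaves, p := by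
      refine Finset.sum_congr rfl fun i hi => Finset.sum_congr rfl fun j hj =>
        hC i (Or.inl hi) j (Or.inr hj) ?_
      exact fun h => Finset.disjoint_left.mp hd hi (h ▸ hj)
    simp only [Finset.sum_const, nsmul_eq_mul] at h3
    simp only [HTree.cost, HTree.leaves, Finset.card_union_of_disjoint hd, Nat.cast_add]
    rw [h1, h2, h3]
    ring

/-- in the `(n,p,q)`-planted partition weights with `0 < q < p ≤ 1` and
`k = 36p/(p−q)²`, any binary tree `T` whose root split `(A,B)` is balanced
(`|A| = |B| = n/2`) and misclassifies at most `k` vertices per side (`|A ∖ P₁| ≤ k`), with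
arbitrary binary subtrees, has `cost(T) ≤ c₁·cost(T₀)` for any binary tree `T₀` whose root
split is exactly `(P₁, P₂)`, where `c₁ = 1 + 144p/(q·n·(p−q))`. -/
theorem planted_partition_spectral_cost {α : Type*} [Fintype α] [DecidableEq α]
    (n : ℕ) (hn : 4 ≤ n) (hcard : Fintype.card α = n)
    (P₁ : Finset α) (hP₁ : 2 * P₁.card = n)
    (p q : ℝ) (hq0 : 0 < q) (hqp : q < p) (hp1 : p ≤ 1)
    (C : α → α → ℝ)
    (hC : ∀ i j, C i j = if i = j then 0 else if (i ∈ P₁ ↔ j ∈ P₁) then p else q)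
    -- the tree `T = node TA TB`, with root split `(A, B)`
    (TA TB : HTree α) (hT : (HTree.node TA TB).IsTreeOn)
    (hbal : 2 * TA.leaves.card = n)
    (hmis : ((TA.leaves \ P₁).card : ℝ) ≤ 36 * p / (p - q)^2)
    -- the tree `T₀ = node TL TR`, with root split exactly `(P₁, P₂)`
    (TL TR : HTree α) (hT₀ : (HTree.node TL TR).IsTreeOn)
    (hTL : TL.leaves = P₁) (hTR : TR.leaves = P₁ᶜ) :
    HTree.cost C (HTree.node TA TB)
      ≤ (1 + 144 * p / (q * (n : ℝ) * (p - q))) * HTree.cost C (HTree.node TL TR) := by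
  obtain ⟨⟨hA, hB, hAB⟩, hU⟩ := hT
  obtain ⟨⟨hL, hR, hLR⟩, hU₀⟩ := hT₀
  simp only [HTree.leaves] at hU hU₀
  have hBc : TB.leaves = TA.leavesᶜ := by
    ext x
    have h1 : x ∈ TA.leaves → x ∉ TB.leaves := fun h => Finset.disjoint_left.mp hAB h
    have h2 : x ∈ TA.leaves ∪ TB.leaves := hU ▸ Finset.mem_univ x
    simp only [Finset.mem_union, Finset.mem_compl] at *
    tauto
  obtain ⟨m, hm⟩ : ∃ m, m = P₁.card := ⟨_, rfl⟩
  have hA' : TA.leaves.card = m := by omega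
  have hB' : TB.leaves.card = m := by rw [hBc, Finset.card_compl]; omega
  have hR' : P₁ᶜ.card = m := by rw [Finset.card_compl]; omega
  have hmis' : (TB.leaves ∩ P₁).card = (TA.leaves \ P₁).card := by
    have e1 := Finset.card_inter_add_card_sdiff TA.leaves P₁
    have e2 := Finset.card_inter_add_card_sdiff P₁ TA.leaves
    have e3 : TB.leaves ∩ P₁ = P₁ \ TA.leaves := by
      rw [hBc]; ext x; simp only [Finset.mem_inter, Finset.mem_compl, Finset.mem_sdiff]; tauto
    rw [Finset.inter_comm] at e2
    rw [e3]; omega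
  obtain ⟨a, ha⟩ : ∃ a : ℝ, a = ((TA.leaves \ P₁).card : ℝ) := ⟨_, rfl⟩
  have hCle : ∀ i j, i ≠ j → C i j ≤ p := by
    intro i j hij
    rw [hC, if_neg hij]; split_ifs <;> linarith
  have cA := HTree.cost_le_aux C p hCle TA hA
  have cB := HTree.cost_le_aux C p hCle TB hB
  have cL := HTree.cost_eq_aux C p TL (by
    rw [hTL]; intro i hi j hj hij; rw [hC, if_neg hij, if_pos (by tauto)]) hL
  have cR := HTree.cost_eq_aux C p TR (by
    rw [hTR]; intro i hi j hj hij
    rw [Finset.mem_compl] at hi hj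
    rw [hC, if_neg hij, if_pos (by tauto)]) hR
  have s0 : (∑ i ∈ TL.leaves, ∑ j ∈ TR.leaves, C i j) = (m:ℝ) * (m * q) := by
    have : (∑ i ∈ TL.leaves, ∑ j ∈ TR.leaves, C i j) = ∑ i ∈ TL.leaves, ∑ j ∈ TR.leaves, q := by
      refine Finset.sum_congr rfl fun i hi => Finset.sum_congr rfl fun j hj => ?_
      rw [hTL] at hi
      rw [hTR, Finset.mem_compl] at hj
      have hij : i ≠ j := fun h => hj (h ▸ hi)
      rw [hC, if_neg hij, if_neg (by tauto)]
    rw [this, hTL, hTR]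
    simp only [Finset.sum_const, nsmul_eq_mul, hR', ← hm]
  have s1 : (∑ i ∈ TA.leaves, ∑ j ∈ TB.leaves, C i j) ≤
      (m:ℝ) * (m * q) + (p - q) * (2 * a * m) := by
    have h : (∑ i ∈ TA.leaves, ∑ j ∈ TB.leaves, C i j) ≤ ∑ i ∈ TA.leaves, ∑ j ∈ TB.leaves,
        (q + (p - q) * ((if i ∉ P₁ then 1 else 0) + (if j ∈ P₁ then 1 else 0))) := by
      refine Finset.sum_le_sum fun i hi => Finset.sum_le_sum fun j hj => ?_
      have hij : i ≠ j := fun h => Finset.disjoint_left.mp hAB hi (h ▸ hj)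
      rw [hC, if_neg hij]
      by_cases h1 : i ∈ P₁ <;> by_cases h2 : j ∈ P₁ <;> simp [h1, h2] <;> linarith
    refine h.trans (le_of_eq ?_)
    have f1 : (TA.leaves.filter (fun i => i ∉ P₁)) = TA.leaves \ P₁ := by
      ext x; simp
    have f2 : (TB.leaves.filter (fun i => i ∈ P₁)) = TB.leaves ∩ P₁ := by
      ext x; simp
    simp only [Finset.sum_add_distrib, ← Finset.mul_sum, Finset.sum_const, nsmul_eq_mul,
      Finset.sum_boole, f1, f2, hmis', hA', hB', ← ha]
    ring
  have u1 : (((TA.leaves ∪ TB.leaves).card : ℕ) : ℝ) = 2 * m := by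
    rw [Finset.card_union_of_disjoint hAB, hA', hB']; push_cast; ring
  have u0 : (((TL.leaves ∪ TR.leaves).card : ℕ) : ℝ) = 2 * m := by
    rw [Finset.card_union_of_disjoint hLR, hTL, hTR, hR', ← hm]; push_cast; ring
  have hn2 : (n : ℝ) = 2 * m := by rw [← hP₁, ← hm]; push_cast; ring
  have hm2 : (2:ℝ) ≤ m := by
    have : 2 ≤ m := by omega
    exact_mod_cast this
  have hd : 0 < p - q := by linarith
  rw [hA'] at cA
  rw [hB'] at cB
  rw [hTL, ← hm] at cL
  rw [hTR, hR'] at cR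
  rw [← ha] at hmis
  simp only [HTree.cost]
  rw [u1, u0, s0, cL, cR, hn2]
  have hK : 0 ≤ p * ((m:ℝ)^3 - m) / 3 := by
    have h1 : (0:ℝ) ≤ (m:ℝ)^3 - m := by nlinarith [sq_nonneg ((m:ℝ) - 1)]
    have : 0 ≤ p := by linarith
    positivity
  set K := p * ((m:ℝ)^3 - m) / 3
  have hε : 0 ≤ 144 * p / (q * (2 * (m:ℝ)) * (p - q)) := by
    have : 0 < p := by linarith
    positivity
  have key : 144 * p / (q * (2 * (m:ℝ)) * (p - q)) * (2 * m * (m * (m * q)))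
      = (4 * m ^ 2 * (p - q)) * (36 * p / (p - q) ^ 2) := by
    have : (m:ℝ) ≠ 0 := by linarith
    field_simp
    ring
  have k2 := mul_le_mul_of_nonneg_left hmis (show 0 ≤ 4 * (m:ℝ) ^ 2 * (p - q) by positivity)
  have k3 := mul_le_mul_of_nonneg_left s1 (show 0 ≤ 2 * (m:ℝ) by positivity)
  have k4 := mul_nonneg hε hK
  rw [← key] at k2
  set ε := 144 * p / (q * (2 * (m:ℝ)) * (p - q))
  nlinarith
end

section
/- Let V be a finite set with |V| = n ≥ 2 and symmetric weights C : V × V → [0,1] with C_ii = 0, let 0 < Δ_min ≤ Δ_max, and let ε ≥ 0. Let T be a binary hierarchical clustering tree on V such that: (i) for every internal node t of T with leaf set V_t, every i ∈ V_t has Δ_min ≤ Σ_{j ∈ V_t} C_ij ≤ Δ_max; and (ii) at every internal node t, the split of V_t into the leaf sets (A_t, B_t) of its two children satisfies φ_{V_t}(A_t) ≤ (Δ_max/√Δ_min)·√(min_{∅ ≠ S ⊊ V_t} φ_{V_t}(S) + ε) (the quality guarantee obtained from approximate eigenvectors computed by power iteration). Then cost_V(T) ≤ Δ_max·√(27/Δ_min)·n·log₂(n)·√(cost_V(T*)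 + n²·ε), where T* minimizes cost_V. -/
open Finset

/-- The two conditions, at every internal node `t` of the tree with leaf set `V_t`:
(i) every `i ∈ V_t` has degree (within `V_t`) in `[Δ_min, Δ_max]`; and
(ii) the split `(A_t, B_t)` of `V_t` into the leaf sets of the two children satisfies the
approximate-eigenvector sweep-cut guarantee
`φ_{V_t}(A_t) ≤ (Δ_max/√Δ_min)·√(min_{∅ ≠ S ⊊ V_t} φ_{V_t}(S) + ε)`,
expressed equivalently as `φ_{V_t}(A_t) ≤ (Δ_max/√Δ_min)·√(φ_{V_t}(S) + ε)` for every
nonempty proper `S ⊊ V_t`. -/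
def ApproxCheegerSplits {α : Type*} [DecidableEq α]
    (C : α → α → ℝ) (Δmin Δmax ε : ℝ) : HTree α → Prop
  | .leaf _ => True
  | .node l r =>
      (∀ i ∈ l.leaves ∪ r.leaves,
          Δmin ≤ (∑ j ∈ l.leaves ∪ r.leaves, C i j) ∧
            (∑ j ∈ l.leaves ∪ r.leaves, C i j) ≤ Δmax) ∧
      (∀ S ⊆ l.leaves ∪ r.leaves, S.Nonempty → S ≠ l.leaves ∪ r.leaves →
          expansionIn C (l.leaves ∪ r.leaves) l.leaves
            ≤ (Δmax / Real.sqrt Δmin)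
                * Real.sqrt (expansionIn C (l.leaves ∪ r.leaves) S + ε)) ∧
      ApproxCheegerSplits C Δmin Δmax ε l ∧ ApproxCheegerSplits C Δmin Δmax ε r

section Aux

variable {α : Type*} [DecidableEq α]

lemma aux_cut_nonneg (C : α → α → ℝ) (h0 : ∀ i j, 0 ≤ C i j) (A B : Finset α) :
    0 ≤ ∑ i ∈ A, ∑ j ∈ B, C i j :=
  Finset.sum_nonneg fun _ _ => Finset.sum_nonneg fun _ _ => h0 _ _

lemma aux_cut_mono (C : α → α → ℝ) (h0 : ∀ i j, 0 ≤ C i j) {A B A' B' : Finset α}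
    (hA : A ⊆ A') (hB : B ⊆ B') :
    ∑ i ∈ A, ∑ j ∈ B, C i j ≤ ∑ i ∈ A', ∑ j ∈ B', C i j :=
  (Finset.sum_le_sum fun _ _ =>
    Finset.sum_le_sum_of_subset_of_nonneg hB fun _ _ _ => h0 _ _).trans
  (Finset.sum_le_sum_of_subset_of_nonneg hA fun _ _ _ => Finset.sum_nonneg fun _ _ => h0 _ _)

lemma aux_cut_union (C : α → α → ℝ) (h0 : ∀ i j, 0 ≤ C i j) (A B B' : Finset α) :
    ∑ i ∈ A, ∑ j ∈ B ∪ B', C i j ≤ ∑ i ∈ A, ∑ j ∈ B, C i j + ∑ i ∈ A, ∑ j ∈ B', C i j := by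
  rw [← Finset.sum_add_distrib]
  refine Finset.sum_le_sum fun i _ => ?_
  have := Finset.sum_union_inter (s₁ := B) (s₂ := B') (f := fun j => C i j)
  have h2 : 0 ≤ ∑ j ∈ B ∩ B', C i j := Finset.sum_nonneg fun _ _ => h0 _ _
  linarith

lemma aux_cut_symm (C : α → α → ℝ) (hs : ∀ i j, C i j = C j i) (A B : Finset α) :
    ∑ i ∈ A, ∑ j ∈ B, C i j = ∑ i ∈ B, ∑ j ∈ A, C i j := by
  rw [Finset.sum_comm]
  exact Finset.sum_congr rfl fun _ _ => Finset.sum_congr rfl fun _ _ => hs _ _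

lemma aux_cost_nonneg (C : α → α → ℝ) (h0 : ∀ i j, 0 ≤ C i j) (T : HTree α) :
    0 ≤ HTree.cost C T := by
  induction T with
  | leaf a => simp [HTree.cost]
  | node l r hl hr =>
    have := aux_cut_nonneg C h0 l.leaves r.leaves
    simp only [HTree.cost]
    positivity

lemma aux_balanced (C : α → α → ℝ) (h0 : ∀ i j, 0 ≤ C i j) (hs : ∀ i j, C i j = C j i)
    (W : Finset α) (m : ℕ) (hm : 2 ≤ m) (T : HTree α)
    (hT : 2 * m < 3 * (T.leaves ∩ W).card) :
    ∃ S ⊆ T.leaves ∩ W, m ≤ 3 * S.card ∧ 3 * S.card ≤ 2 * m ∧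
      (2 * m / 3 : ℝ) * (∑ i ∈ S, ∑ j ∈ (T.leaves ∩ W) \ S, C i j) ≤ HTree.cost C T := by
  induction T with
  | leaf a =>
    exfalso
    have : (({a} : Finset α) ∩ W).card ≤ ({a} : Finset α).card :=
      Finset.card_le_card Finset.inter_subset_left
    simp only [HTree.leaves, Finset.card_singleton] at hT this
    omega
  | node l r hl hr =>
    simp only [HTree.leaves, HTree.cost] at hT ⊢
    have hcl := aux_cost_nonneg C h0 l
    have hcr := aux_cost_nonneg C h0 r
    have hsz : (2 * m / 3 : ℝ) ≤ ((l.leaves ∪ r.leaves).card : ℝ) := by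
      have h1 : ((l.leaves ∪ r.leaves) ∩ W).card ≤ (l.leaves ∪ r.leaves).card :=
        Finset.card_le_card Finset.inter_subset_left
      have h2 : 2 * m ≤ 3 * (l.leaves ∪ r.leaves).card := by omega
      have h3 : (2 * m : ℝ) ≤ 3 * ((l.leaves ∪ r.leaves).card : ℝ) := by exact_mod_cast h2
      linarith
    have hm0 : (0 : ℝ) ≤ 2 * m / 3 := by positivity
    have hlr := aux_cut_nonneg C h0 l.leaves r.leaves
    have hroot : (2 * m / 3 : ℝ) * (∑ i ∈ l.leaves, ∑ j ∈ r.leaves, C i j) ≤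
        ((l.leaves ∪ r.leaves).card : ℝ) * (∑ i ∈ l.leaves, ∑ j ∈ r.leaves, C i j) :=
      mul_le_mul_of_nonneg_right hsz hlr
    have keyl : ∀ S ⊆ l.leaves ∩ W,
        ∑ i ∈ S, ∑ j ∈ ((l.leaves ∪ r.leaves) ∩ W) \ S, C i j ≤
        ∑ i ∈ S, ∑ j ∈ (l.leaves ∩ W) \ S, C i j +
          ∑ i ∈ l.leaves, ∑ j ∈ r.leaves, C i j := by
      intro S hS
      refine le_trans (aux_cut_mono C h0 (subset_refl S)
        (B' := ((l.leaves ∩ W) \ S) ∪ r.leaves) ?_) ((aux_cut_union C h0 _ _ _).trans ?_)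
      · intro x; simp only [Finset.mem_sdiff, Finset.mem_inter, Finset.mem_union]; tauto
      · have := aux_cut_mono C h0 (A := S) (A' := l.leaves) (B := r.leaves) (B' := r.leaves)
          (hS.trans Finset.inter_subset_left) (subset_refl _)
        linarith
    have keyr : ∀ S ⊆ r.leaves ∩ W,
        ∑ i ∈ S, ∑ j ∈ ((l.leaves ∪ r.leaves) ∩ W) \ S, C i j ≤
        ∑ i ∈ S, ∑ j ∈ (r.leaves ∩ W) \ S, C i j +
          ∑ i ∈ l.leaves, ∑ j ∈ r.leaves, C i j := by
      intro S hS
      refine le_trans (aux_cut_mono C h0 (subset_refl S)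
        (B' := ((r.leaves ∩ W) \ S) ∪ l.leaves) ?_) ((aux_cut_union C h0 _ _ _).trans ?_)
      · intro x; simp only [Finset.mem_sdiff, Finset.mem_inter, Finset.mem_union]; tauto
      · have := aux_cut_mono C h0 (A := S) (A' := r.leaves) (B := l.leaves) (B' := l.leaves)
          (hS.trans Finset.inter_subset_left) (subset_refl _)
        rw [aux_cut_symm C hs l.leaves r.leaves]
        linarith
    have hsubl : l.leaves ∩ W ⊆ (l.leaves ∪ r.leaves) ∩ W :=
      Finset.inter_subset_inter_right Finset.subset_union_left
    have hsubr : r.leaves ∩ W ⊆ (l.leaves ∪ r.leaves) ∩ W :=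
      Finset.inter_subset_inter_right Finset.subset_union_right
    have hcu : ((l.leaves ∪ r.leaves) ∩ W).card ≤ (l.leaves ∩ W).card + (r.leaves ∩ W).card := by
      rw [Finset.union_inter_distrib_right]; exact Finset.card_union_le _ _
    by_cases h1 : 2 * m < 3 * (l.leaves ∩ W).card
    · obtain ⟨S, hS, ha, hb, hc⟩ := hl h1
      refine ⟨S, hS.trans hsubl, ha, hb, ?_⟩
      have := mul_le_mul_of_nonneg_left (keyl S hS) hm0
      rw [mul_add] at this
      linarith
    by_cases h2 : 2 * m < 3 * (r.leaves ∩ W).card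
    · obtain ⟨S, hS, ha, hb, hc⟩ := hr h2
      refine ⟨S, hS.trans hsubr, ha, hb, ?_⟩
      have := mul_le_mul_of_nonneg_left (keyr S hS) hm0
      rw [mul_add] at this
      linarith
    by_cases h3 : m ≤ 3 * (l.leaves ∩ W).card
    · refine ⟨l.leaves ∩ W, hsubl, h3, by omega, ?_⟩
      have := mul_le_mul_of_nonneg_left (keyl _ (subset_refl _)) hm0
      simp only [Finset.sdiff_self, Finset.sum_empty, Finset.sum_const_zero, zero_add] at this
      linarith
    · refine ⟨r.leaves ∩ W, hsubr, by omega, by omega, ?_⟩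
      have := mul_le_mul_of_nonneg_left (keyr _ (subset_refl _)) hm0
      simp only [Finset.sdiff_self, Finset.sum_empty, Finset.sum_const_zero, zero_add] at this
      linarith

lemma aux_leaves_pos (T : HTree α) : 0 < T.leaves.card := by
  induction T with
  | leaf a => simp [HTree.leaves]
  | node l r hl hr =>
    exact hl.trans_le (Finset.card_le_card Finset.subset_union_left)

lemma aux_log (a b : ℝ) (ha : 1 ≤ a) (hb : 1 ≤ b) (hab : a ≤ b) :
    a * Real.logb 2 a + b * Real.logb 2 b + a ≤ (a + b) * Real.logb 2 (a + b) := by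
  have h1 : Real.logb 2 a + 1 ≤ Real.logb 2 (a + b) := by
    have : Real.logb 2 a + 1 = Real.logb 2 (a * 2) := by
      rw [Real.logb_mul (by linarith) (by norm_num), Real.logb_self_eq_one (by norm_num)]
    rw [this]
    exact Real.logb_le_logb_of_le (by norm_num) (by linarith) (by linarith)
  have h2 : Real.logb 2 b ≤ Real.logb 2 (a + b) :=
    Real.logb_le_logb_of_le (by norm_num) (by linarith) (by linarith)
  nlinarith

lemma aux_log_min (a b : ℝ) (ha : 1 ≤ a) (hb : 1 ≤ b) :
    a * Real.logb 2 a + b * Real.logb 2 b + min a b ≤ (a + b) * Real.logb 2 (a + b) := by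
  rcases le_total a b with h | h
  · rw [min_eq_left h]; exact aux_log a b ha hb h
  · rw [min_eq_right h, add_comm a b]
    have := aux_log b a hb ha h
    linarith

lemma aux_phi [Fintype α] (C : α → α → ℝ) (h0 : ∀ i j, 0 ≤ C i j) (hs : ∀ i j, C i j = C j i)
    (Ts : HTree α) (hTs : Ts.leaves = Finset.univ) (W : Finset α) (hW : 2 ≤ W.card) :
    ∃ S ⊆ W, S.Nonempty ∧ S ≠ W ∧
      (W.card : ℝ) ^ 2 * expansionIn C W S ≤ 27 * HTree.cost C Ts := by
  obtain ⟨S, hS, ha, hb, hc⟩ := aux_balanced C h0 hs W W.card hW Ts (by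
    rw [hTs, Finset.univ_inter]; omega)
  rw [hTs, Finset.univ_inter] at hS hc
  refine ⟨S, hS, ?_, ?_, ?_⟩
  · rw [← Finset.card_pos]; omega
  · rintro rfl; omega
  have hd : (W \ S).card = W.card - S.card := Finset.card_sdiff_of_subset hS
  have hmin : (W.card : ℝ) / 3 ≤ min (S.card : ℝ) ((W \ S).card : ℝ) := by
    apply le_min
    · have : (W.card : ℝ) ≤ 3 * S.card := by exact_mod_cast ha
      linarith
    · have h : W.card ≤ 3 * (W \ S).card := by omega
      have : (W.card : ℝ) ≤ 3 * (W \ S).card := by exact_mod_cast h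
      linarith
  have hWp : (0 : ℝ) < W.card := by
    have : 0 < W.card := by omega
    exact_mod_cast this
  have hcut := aux_cut_nonneg C h0 S (W \ S)
  have hcost := aux_cost_nonneg C h0 Ts
  unfold expansionIn
  generalize (∑ i ∈ S, ∑ j ∈ W \ S, C i j) = x at *
  have h1 : x / min (S.card : ℝ) ((W \ S).card : ℝ) ≤ x / ((W.card : ℝ) / 3) :=
    div_le_div_of_nonneg_left hcut (by positivity) hmin
  calc (W.card : ℝ) ^ 2 * (x / min (S.card : ℝ) ((W \ S).card : ℝ))
      ≤ (W.card : ℝ) ^ 2 * (x / ((W.card : ℝ) / 3)) := by gcongr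
    _ = 9 / 2 * (2 * W.card / 3 * x) := by field_simp; ring
    _ ≤ 27 * HTree.cost C Ts := by nlinarith

lemma aux_main [Fintype α] (C : α → α → ℝ) (h0 : ∀ i j, 0 ≤ C i j)
    (hs : ∀ i j, C i j = C j i)
    (Δmin Δmax : ℝ) (hΔmin : 0 < Δmin) (hΔ : Δmin ≤ Δmax) (ε : ℝ) (hε : 0 ≤ ε)
    (Ts : HTree α) (hTs : Ts.leaves = Finset.univ) (T : HTree α)
    (hT : T.distinctLeaves) (hsp : ApproxCheegerSplits C Δmin Δmax ε T) :
    HTree.cost C T ≤ Δmax * Real.sqrt (27 / Δmin) *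
      Real.sqrt (HTree.cost C Ts + (Fintype.card α : ℝ) ^ 2 * ε) *
      ((T.leaves.card : ℝ) * Real.logb 2 T.leaves.card) := by
  induction T with
  | leaf a => simp [HTree.cost, HTree.leaves]
  | node l r hl hr =>
    obtain ⟨hdl, hdr, hdis⟩ := hT
    obtain ⟨-, hcut, hsl, hsr⟩ := hsp
    have il := hl hdl hsl
    have ir := hr hdr hsr
    have hcost := aux_cost_nonneg C h0 Ts
    set Q := Real.sqrt (HTree.cost C Ts + (Fintype.card α : ℝ) ^ 2 * ε) with hQ
    have hpl : 1 ≤ l.leaves.card := aux_leaves_pos l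
    have hpr : 1 ≤ r.leaves.card := aux_leaves_pos r
    have hcu : (l.leaves ∪ r.leaves).card = l.leaves.card + r.leaves.card :=
      Finset.card_union_of_disjoint hdis
    obtain ⟨S, hS, hne, hneq, hphi⟩ :=
      aux_phi C h0 hs Ts hTs (l.leaves ∪ r.leaves) (by omega)
    have h := hcut S hS hne hneq
    have hsd : (l.leaves ∪ r.leaves) \ l.leaves = r.leaves := by
      rw [Finset.union_sdiff_left, Finset.sdiff_eq_self_of_disjoint hdis.symm]
    have hplR : (1 : ℝ) ≤ l.leaves.card := by exact_mod_cast hpl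
    have hprR : (1 : ℝ) ≤ r.leaves.card := by exact_mod_cast hpr
    have hminpos : (0 : ℝ) < min (l.leaves.card : ℝ) (r.leaves.card : ℝ) :=
      lt_min (by linarith) (by linarith)
    have hL : expansionIn C (l.leaves ∪ r.leaves) l.leaves =
      (∑ i ∈ l.leaves, ∑ j ∈ r.leaves, C i j) /
        min (l.leaves.card : ℝ) (r.leaves.card : ℝ) := by
      unfold expansionIn; rw [hsd]
    rw [hL, div_le_iff₀ hminpos] at h
    have hMle : ((l.leaves ∪ r.leaves).card : ℝ) ≤ (Fintype.card α : ℝ) := by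
      exact_mod_cast Finset.card_le_univ _
    have hΔ0 : 0 ≤ Δmax := by linarith
    have hsq : ((l.leaves ∪ r.leaves).card : ℝ) *
        Real.sqrt (expansionIn C (l.leaves ∪ r.leaves) S + ε) ≤ Real.sqrt 27 * Q := by
      rw [hQ, ← Real.sqrt_mul (by norm_num)]
      apply Real.le_sqrt_of_sq_le
      have he : 0 ≤ expansionIn C (l.leaves ∪ r.leaves) S := by
        unfold expansionIn
        have := aux_cut_nonneg C h0 S ((l.leaves ∪ r.leaves) \ S)
        positivity
      rw [mul_pow, Real.sq_sqrt (by linarith), mul_add]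
      have h5 : ((l.leaves ∪ r.leaves).card : ℝ) ^ 2 * ε ≤ (Fintype.card α : ℝ) ^ 2 * ε := by
        gcongr
      have h6 : 0 ≤ (Fintype.card α : ℝ) ^ 2 * ε := by positivity
      linarith
    have hroot : ((l.leaves ∪ r.leaves).card : ℝ) * (∑ i ∈ l.leaves, ∑ j ∈ r.leaves, C i j) ≤
        Δmax * Real.sqrt (27 / Δmin) * Q * min (l.leaves.card : ℝ) (r.leaves.card : ℝ) := by
      rw [Real.sqrt_div (by norm_num)]
      calc _ ≤ ((l.leaves ∪ r.leaves).card : ℝ) * (Δmax / Real.sqrt Δmin *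
            Real.sqrt (expansionIn C (l.leaves ∪ r.leaves) S + ε) *
            min (l.leaves.card : ℝ) (r.leaves.card : ℝ)) := by gcongr
        _ = (Δmax / Real.sqrt Δmin) * (((l.leaves ∪ r.leaves).card : ℝ) *
            Real.sqrt (expansionIn C (l.leaves ∪ r.leaves) S + ε)) *
            min (l.leaves.card : ℝ) (r.leaves.card : ℝ) := by ring
        _ ≤ (Δmax / Real.sqrt Δmin) * (Real.sqrt 27 * Q) *
            min (l.leaves.card : ℝ) (r.leaves.card : ℝ) := by gcongr
        _ = _ := by ring
    have hK : 0 ≤ Δmax * Real.sqrt (27 / Δmin) * Q := by positivity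
    have hlog := mul_le_mul_of_nonneg_left (aux_log_min _ _ hplR hprR) hK
    simp only [HTree.cost, HTree.leaves]
    rw [← Nat.cast_add, ← hcu] at hlog
    rw [mul_add, mul_add] at hlog
    linarith

end Aux

/-- if `T` is a binary hierarchical clustering tree on `V` (`|V| = n ≥ 2`)
whose every internal node has degrees within `[Δ_min, Δ_max]` and whose every split meets
the approximate (power-iteration) Cheeger sweep-cut quality guarantee with slack `ε ≥ 0`,
then `cost_V(T) ≤ Δ_max·√(27/Δ_min)·n·log₂(n)·√(cost_V(T*) + n²·ε)`
where `T*` minimizes `cost_V`. -/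
theorem cost_approx_spectral_split_bound {α : Type*} [Fintype α] [DecidableEq α]
    (n : ℕ) (hn : 2 ≤ n) (hcard : Fintype.card α = n)
    (C : α → α → ℝ)
    (hsymm : ∀ i j, C i j = C j i)
    (h0 : ∀ i j, 0 ≤ C i j) (h1 : ∀ i j, C i j ≤ 1)
    (hdiag : ∀ i, C i i = 0)
    (Δmin Δmax : ℝ) (hΔmin : 0 < Δmin) (hΔ : Δmin ≤ Δmax)
    (ε : ℝ) (hε : 0 ≤ ε)
    (T : HTree α) (hT : T.IsTreeOn) (hsplits : ApproxCheegerSplits C Δmin Δmax ε T)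
    (Tstar : HTree α) (hTstar : Tstar.IsTreeOn)
    (hmin : ∀ T' : HTree α, T'.IsTreeOn → HTree.cost C Tstar ≤ HTree.cost C T') :
    HTree.cost C T
      ≤ Δmax * Real.sqrt (27 / Δmin) * (n : ℝ) * Real.logb 2 (n : ℝ)
          * Real.sqrt (HTree.cost C Tstar + (n : ℝ)^2 * ε) := by
  have h := aux_main C h0 hsymm Δmin Δmax hΔmin hΔ ε hε Tstar hTstar.2 T hT.1 hsplits
  rw [hT.2, Finset.card_univ, hcard] at h
  linarith
end
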